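/- arXiv:1407.4720 — 2 statements merged into one kernel-verified Lean document; each statement's English description precedes it below -/
import Mathlib

section
/- Let n ≥ 1 and d ≥ 1 be integers. For any integer t, the number of points (x_1, ..., x_d) ∈ {1, ..., n}^d with x_1 + x_2 + ... + x_d = t is at most (n+d-2)^{d-1}·√(2/d). -/
open Real Finset

lemma euler_bound (n : ℕ) (hn : 1 ≤ n) (θ : ℝ) (h0 : 0 ≤ θ) (h1 : n * θ ≤ π) :
    sin (n * θ) ≤ n * sin θ * exp (-(((n:ℝ)^2 - 1) * θ^2 / 6)) := by
  have hpi := Real.pi_pos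
  have hn' : (1:ℝ) ≤ n := by exact_mod_cast hn
  set x : ℝ := θ / π with hx
  have hx0 : 0 ≤ x := by positivity
  have hθ : θ = π * x := by rw [hx]; field_simp
  have hx1 : n * x ≤ 1 := by
    rw [hx, ← mul_div_assoc, div_le_one hpi]; exact h1
  have e1 := Real.tendsto_euler_sin_prod (n * x)
  have e2 := Real.tendsto_euler_sin_prod x
  have hz : HasSum (fun j : ℕ => 1 / ((j:ℝ) + 1)^2) (π^2/6) := by
    have := (hasSum_nat_add_iff' 1).mpr hasSum_zeta_two
    simpa using this
  have e3 := hz.tendsto_sum_nat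
  have e4 : Filter.Tendsto (fun N : ℕ => exp (-(((n:ℝ)^2-1) * x^2 * ∑ j ∈ range N, 1 / ((j:ℝ) + 1)^2)))
     Filter.atTop (nhds (exp (-(((n:ℝ)^2-1) * x^2 * (π^2/6))))) :=
    (Real.continuous_exp.tendsto _).comp ((e3.const_mul _).neg)
  have e5 := (e2.const_mul (n:ℝ)).mul e4
  have := le_of_tendsto_of_tendsto' e1 e5 ?_
  · rw [hθ]
    have q1 : (n:ℝ) * (π * x) = π * (n * x) := by ring
    have q2 : ((n:ℝ)^2 - 1) * (π * x)^2 / 6 = ((n:ℝ)^2-1) * x^2 * (π^2/6) := by ring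
    rw [q1, q2]
    exact this
  intro N
  have key : ∏ j ∈ range N, (1 - (n * x)^2 / ((j:ℝ)+1)^2) ≤
      ∏ j ∈ range N, ((1 - x^2 / ((j:ℝ)+1)^2) * exp (-(((n:ℝ)^2-1) * x^2 * (1 / ((j:ℝ) + 1)^2)))) := by
    have hnx : (n*x)^2 ≤ 1 := by
      have : 0 ≤ n * x := by positivity
      nlinarith
    have hxn : x^2 ≤ (n*x)^2 := by
      rw [mul_pow]
      have : (1:ℝ) ≤ (n:ℝ)^2 := by nlinarith
      exact le_mul_of_one_le_left (sq_nonneg x) this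
    apply Finset.prod_le_prod
    · intro j _
      have : (1:ℝ) ≤ ((j:ℝ)+1)^2 := by nlinarith [(Nat.cast_nonneg j : (0:ℝ) ≤ j)]
      have : (n * x)^2 / ((j:ℝ)+1)^2 ≤ 1 := by
        rw [div_le_one (by positivity)]; linarith
      linarith
    · intro j _
      have h1 : (1:ℝ) ≤ ((j:ℝ)+1)^2 := by nlinarith [(Nat.cast_nonneg j : (0:ℝ) ≤ j)]
      set y := x^2 / ((j:ℝ)+1)^2 with hy
      have hy0 : 0 ≤ y := by positivity
      have hy1 : y ≤ 1 := by
        rw [hy, div_le_one (by positivity)]; linarith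
      have q1 : (n * x)^2 / ((j:ℝ)+1)^2 = n^2 * y := by rw [hy]; ring
      have q2 : ((n:ℝ)^2-1) * x^2 * (1 / ((j:ℝ) + 1)^2) = (n^2-1)*y := by rw [hy]; ring
      rw [q1, q2]
      have h2 := Real.add_one_le_exp (-(((n:ℝ)^2-1)*y))
      have h3 : (0:ℝ) ≤ n^2 - 1 := by nlinarith
      have h4 := mul_le_mul_of_nonneg_left h2 (sub_nonneg.2 hy1)
      nlinarith [mul_nonneg h3 (mul_nonneg hy0 hy0)]
  rw [Finset.prod_mul_distrib, ← Real.exp_sum] at key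
  rw [Finset.sum_neg_distrib, ← Finset.mul_sum] at key
  have := mul_le_mul_of_nonneg_left key (show 0 ≤ π * (n * x) by positivity)
  refine this.trans (le_of_eq ?_)
  ring

lemma tail_int (a : ℝ) (ha : 0 < a) (ha' : a ≤ π/2) :
    ∫ θ in a..(π/2), (1 / sin θ)^4 ≤ 1 / a + 1 / (3 * a^3) := by
  have hs : ∀ θ ∈ Set.uIcc a (π/2), 0 < sin θ := by
    intro θ h
    rw [Set.uIcc_of_le ha'] at h
    exact Real.sin_pos_of_pos_of_lt_pi (by linarith [h.1]) (by linarith [h.2, Real.pi_pos])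
  have := intervalIntegral.integral_eq_sub_of_hasDerivAt (a := a) (b := π/2)
    (f := fun θ => - (cos θ / sin θ) - (cos θ / sin θ)^3/3) (f' := fun θ => (1 / sin θ)^4) ?_ ?_
  · rw [this]
    simp only [cos_pi_div_two]
    have hsa := hs a Set.left_mem_uIcc
    have hc : cos a / sin a ≤ 1 / a := by
      rcases eq_or_lt_of_le ha' with h | h
      · rw [h]; simp; positivity
      have h1 := Real.le_tan ha.le h
      have hca : 0 < cos a := Real.cos_pos_of_mem_Ioo ⟨by linarith, h⟩
      rw [Real.tan_eq_sin_div_cos, le_div_iff₀ hca] at h1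
      rw [div_le_div_iff₀ hsa ha]; linarith
    have hc0 : 0 ≤ cos a / sin a := 
      div_nonneg (Real.cos_nonneg_of_neg_pi_div_two_le_of_le (by linarith) ha') hsa.le
    have := pow_le_pow_left₀ hc0 hc 3
    have e : 1 / (3 * a^3) = (1/a)^3/3 := by field_simp
    rw [e]; norm_num at *; linarith
  · intro θ h
    have h1 := (hs θ h)
    have hd := (Real.hasDerivAt_cos θ).div (Real.hasDerivAt_sin θ) h1.ne'
    have := hd.neg.sub ((hd.pow 3).div_const 3)
    refine HasDerivAt.congr_deriv this ?_
    have := Real.sin_sq_add_cos_sq θ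
    have e : -sin θ * sin θ - cos θ * cos θ = -1 := by linarith
    rw [e]
    simp
    field_simp
    linarith
  · apply ContinuousOn.intervalIntegrable
    refine ContinuousOn.pow (ContinuousOn.div continuousOn_const Real.continuous_sin.continuousOn fun θ h => (hs θ h).ne') 4

lemma abs_sum_bound : ∀ n : ℕ, (n:ℤ)^2 - 1 ≤ 2 * ∑ x ∈ range n, |(n:ℤ) - 1 - 2 * x|
  | 0 => by simp
  | 1 => by simp
  | n+2 => by
    have ih := abs_sum_bound n
    rw [Finset.sum_range_succ, Finset.sum_range_succ']
    have : ∀ x : ℕ, |((n+2:ℕ):ℤ) - 1 - 2 * ((x+1:ℕ):ℤ)| = |(n:ℤ)-1-2*x| := by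
      intro x; congr 1; push_cast; ring
    simp only [this]
    have e1 : |((n+2:ℕ):ℤ) - 1 - 2 * ((0:ℕ):ℤ)| = n+1 := by
      rw [abs_of_nonneg] <;> push_cast <;> linarith
    have e2 : |((n+2:ℕ):ℤ) - 1 - 2 * ((n+1:ℕ):ℤ)| = n+1 := by
      rw [abs_of_nonpos] <;> push_cast <;> linarith
    have e2' := e2
    rw [this] at e2'
    rw [e1, e2']; push_cast; nlinarith

lemma card_two (n : ℕ) (t : ℤ) :
    ((Fintype.piFinset (fun _ : Fin 2 => Finset.Icc 1 n)).filter
        (fun x : Fin 2 → ℕ => (∑ i, (x i : ℤ)) = t)).card ≤ n := by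
  have := Finset.card_le_card_of_injOn (s := ((Fintype.piFinset (fun _ : Fin 2 => Finset.Icc 1 n)).filter
        (fun x : Fin 2 → ℕ => (∑ i, (x i : ℤ)) = t))) (t := Finset.Icc 1 n) (fun x => x 0) ?_ ?_
  · simpa using this
  · intro x hx
    simp only [coe_filter, Fintype.mem_piFinset, Set.mem_ofPred_eq] at hx
    exact hx.1 0
  · intro x hx y hy h
    simp only [coe_filter, Fintype.mem_piFinset, Set.mem_ofPred_eq, Fin.sum_univ_two] at hx hy
    simp only at h
    ext i
    fin_cases i
    · exact h
    · show x 1 = y 1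
      omega

lemma card_three (n : ℕ) (t : ℤ) :
    4 * (((Fintype.piFinset (fun _ : Fin 3 => Finset.Icc 1 n)).filter
        (fun x : Fin 3 → ℕ => (∑ i, (x i : ℤ)) = t)).card : ℤ) ≤ 3 * n^2 + 1 := by
  set S := ((Fintype.piFinset (fun _ : Fin 3 => Finset.Icc 1 n)).filter
        (fun x : Fin 3 → ℕ => (∑ i, (x i : ℤ)) = t)) with hS
  have hmem : ∀ x ∈ S, (∀ i, 1 ≤ x i ∧ x i ≤ n) ∧ (x 0 : ℤ) + x 1 + x 2 = t := by
    intro x hx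
    simpa [hS, Fin.sum_univ_three] using hx
  set c : ℕ → ℤ := fun a => ((S.filter (fun x => x 0 = a + 1)).card : ℤ) with hc
  have h1 : (S.card : ℤ) = ∑ a ∈ range n, c a := by
    rw [Finset.card_eq_sum_card_fiberwise (f := fun x => x 0 - 1) (t := range n)]
    · push_cast
      refine Finset.sum_congr rfl fun a _ => ?_
      simp only [hc]
      congr 2
      refine Finset.filter_congr fun x hx => ?_
      have := (hmem x hx).1 0
      omega
    · intro x hx
      have := (hmem x hx).1 0
      simp only [coe_range, Set.mem_Iio]
      omega
  have h2 : ∀ a, c a ≤ ((min (n:ℤ) (t - (a+1) - 1) + 1 - max 1 (t - (a+1) - n)).toNat : ℤ) := by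
    intro a
    rw [← Int.card_Icc]
    simp only [hc]
    norm_cast
    refine Finset.card_le_card_of_injOn (fun x => (x 1 : ℤ)) ?_ ?_
    · intro x hx
      simp only [coe_filter, Set.mem_ofPred_eq] at hx
      obtain ⟨hx, h0⟩ := hx
      obtain ⟨q, q'⟩ := hmem x hx
      have := q 1
      have := q 2
      simp only [coe_Icc, Set.mem_Icc]
      push_cast
      omega
    · intro x hx y hy h
      simp only [coe_filter, Set.mem_ofPred_eq] at hx hy
      have hx1 := hmem x hx.1
      have hy1 := hmem y hy.1
      simp only at h
      ext i
      fin_cases i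
      · show x 0 = y 0
        omega
      · show x 1 = y 1
        omega
      · show x 2 = y 2
        omega
  have h3 : ∀ a ∈ range n, c a + c (n - 1 - a) ≤ 2 * n - |(n:ℤ) - 1 - 2 * a| := by
    intro a ha
    have ha := Finset.mem_range.1 ha
    have p1 := h2 a
    have p2 := h2 (n-1-a)
    have e : ((n - 1 - a : ℕ):ℤ) = n - 1 - a := by omega
    rw [e] at p2
    rcases abs_cases ((n:ℤ) - 1 - 2 * a) with ⟨q, _⟩ | ⟨q, _⟩ <;> rw [q] <;> omega
  have h4 := Finset.sum_le_sum h3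
  rw [Finset.sum_add_distrib, Finset.sum_range_reflect, ← h1, Finset.sum_sub_distrib] at h4
  have h5 := abs_sum_bound n
  simp at h4
  nlinarith

lemma dirichlet (n : ℕ) (θ : ℝ) :
    ‖∑ k ∈ Finset.Icc 1 n, Complex.exp (2 * Complex.I * θ * k)‖ * |sin θ| = |sin (n * θ)| := by
  have g : (∑ k ∈ Finset.Icc 1 n, Complex.exp (2 * Complex.I * θ * k)) * (Complex.exp (Complex.I * (2 * θ : ℝ)) - 1)
      = Complex.exp (2 * Complex.I * θ) * (Complex.exp (Complex.I * (2 * (n * θ) : ℝ)) - 1) := by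
    induction n with
    | zero => simp
    | succ m ih =>
      rw [Finset.sum_Icc_succ_top (by omega), add_mul, ih]
      simp only [mul_sub, ← Complex.exp_add, mul_one]
      push_cast
      ring_nf
  have := congrArg norm g
  rw [norm_mul, norm_mul, Complex.norm_exp_I_mul_ofReal_sub_one, Complex.norm_exp_I_mul_ofReal_sub_one] at this
  have e : ‖Complex.exp (2 * Complex.I * θ)‖ = 1 := by
    rw [show 2 * Complex.I * θ = ((2 * θ : ℝ) : ℂ) * Complex.I by push_cast; ring, Complex.norm_exp_ofReal_mul_I]
  rw [e] at this
  simp only [norm_mul, Real.norm_eq_abs] at this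
  rw [show 2 * θ / 2 = θ by ring, show 2 * (n * θ) / 2 = n * θ by ring] at this
  norm_num at this
  linarith

lemma int_exp (m : ℤ) : ∫ θ in (-(π/2))..(π/2), Complex.exp (2 * Complex.I * θ * m) =
    if m = 0 then (π : ℂ) else 0 := by
  split_ifs with h
  · subst h
    simp
  · have hc : 2 * Complex.I * m ≠ 0 := by simp [h]
    have := integral_exp_mul_complex (a := -(π/2)) (b := π/2) hc
    rw [show (fun θ : ℝ => Complex.exp (2 * Complex.I * θ * m)) = fun θ : ℝ => Complex.exp (2 * Complex.I * m * θ) by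
      ext θ; ring_nf]
    rw [this]
    have : Complex.exp (2 * Complex.I * m * (π/2 : ℝ)) = Complex.exp (2 * Complex.I * m * (-(π/2) : ℝ)) := by
      rw [Complex.exp_eq_exp_iff_exists_int]
      exact ⟨m, by push_cast; ring⟩
    rw [this]; simp

lemma count_fourier (n d : ℕ) (t : ℤ) :
    π * (((Fintype.piFinset (fun _ : Fin d => Finset.Icc 1 n)).filter
        (fun x : Fin d → ℕ => (∑ i, (x i : ℤ)) = t)).card : ℝ) ≤
     ∫ θ in (-(π/2))..(π/2), ‖∑ k ∈ Finset.Icc 1 n, Complex.exp (2 * Complex.I * θ * k)‖^d := by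
  have hpi := Real.pi_pos
  have key : ∫ θ in (-(π/2))..(π/2), Complex.exp (2 * Complex.I * θ * (-t : ℤ)) * 
      (∑ k ∈ Finset.Icc 1 n, Complex.exp (2 * Complex.I * θ * k))^d = 
      π * (((Fintype.piFinset (fun _ : Fin d => Finset.Icc 1 n)).filter
        (fun x : Fin d → ℕ => (∑ i, (x i : ℤ)) = t)).card : ℂ) := by
    have e : ∀ θ : ℝ, Complex.exp (2 * Complex.I * θ * (-t : ℤ)) * 
      (∑ k ∈ Finset.Icc 1 n, Complex.exp (2 * Complex.I * θ * k))^d = 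
      ∑ x ∈ Fintype.piFinset (fun _ : Fin d => Finset.Icc 1 n), 
        Complex.exp (2 * Complex.I * θ * ((∑ i, (x i : ℤ)) - t : ℤ)) := by
      intro θ
      rw [Finset.sum_pow', Finset.mul_sum]
      refine Finset.sum_congr rfl fun x _ => ?_
      rw [← Complex.exp_sum, ← Complex.exp_add, ← Finset.mul_sum]
      congr 1
      push_cast
      ring
    simp_rw [e]
    rw [intervalIntegral.integral_finsetSum]
    · simp_rw [int_exp, sub_eq_zero]
      rw [← Finset.sum_filter]
      simp [mul_comm]
    · intro x _
      apply Continuous.intervalIntegrable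
      fun_prop
  have h := intervalIntegral.norm_integral_le_integral_norm (μ := MeasureTheory.volume) (a := -(π/2)) (b := π/2) (f := fun θ : ℝ => Complex.exp (2 * Complex.I * θ * (-t : ℤ)) * 
      (∑ k ∈ Finset.Icc 1 n, Complex.exp (2 * Complex.I * θ * k))^d) (by linarith)
  rw [key] at h
  have e : ∀ θ : ℝ, ‖Complex.exp (2 * Complex.I * θ * (-t : ℤ))‖ = 1 := by
    intro θ
    rw [show 2 * Complex.I * θ * (-t : ℤ) = ((2 * θ * (-t : ℤ) : ℝ) : ℂ) * Complex.I by push_cast; ring, Complex.norm_exp_ofReal_mul_I]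
  simp only [norm_mul, norm_pow, e, one_mul] at h
  simpa [abs_of_pos hpi] using h

lemma fold_int (n d : ℕ) :
    ∫ θ in (-(π/2))..(π/2), ‖∑ k ∈ Finset.Icc 1 n, Complex.exp (2 * Complex.I * θ * k)‖^d =
    2 * ∫ θ in (0:ℝ)..(π/2), ‖∑ k ∈ Finset.Icc 1 n, Complex.exp (2 * Complex.I * θ * k)‖^d := by
  set f : ℝ → ℝ := fun θ => ‖∑ k ∈ Finset.Icc 1 n, Complex.exp (2 * Complex.I * θ * k)‖^d with hf
  have hcont : Continuous f := by fun_prop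
  have hev : ∀ θ, f (-θ) = f θ := by
    intro θ
    simp only [hf]
    rw [← Complex.norm_conj, map_sum]
    have h2 : (starRingEnd ℂ) 2 = 2 := Complex.conj_ofNat 2
    simp [← Complex.exp_conj, h2]
  have := intervalIntegral.integral_comp_neg (a := 0) (b := π/2) f
  simp only [hev, neg_zero] at this
  show ∫ θ in (-(π/2))..(π/2), f θ = 2 * ∫ θ in (0:ℝ)..(π/2), f θ
  rw [← intervalIntegral.integral_add_adjacent_intervals (b := 0) (hcont.intervalIntegrable _ _) (hcont.intervalIntegrable _ _), ← this]
  ring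

lemma main_int (n d : ℕ) (hn : 2 ≤ n) (hd : 4 ≤ d) :
    ∫ θ in (0:ℝ)..(π/2), ‖∑ k ∈ Finset.Icc 1 n, Complex.exp (2 * Complex.I * θ * k)‖^d ≤
     n^d * (√(π / (d * ((n:ℝ)^2-1)/6)) / 2) + ((n:ℝ)/2)^(d-4) * (n / π + n^3/(3*π^3)) := by
  have hpi := Real.pi_pos
  have hn2 : (2:ℝ) ≤ n := by exact_mod_cast hn
  have hd4 : (4:ℝ) ≤ d := by exact_mod_cast hd
  have hn0 : (0:ℝ) < n := by linarith
  set f : ℝ → ℝ := fun θ => ‖∑ k ∈ Finset.Icc 1 n, Complex.exp (2 * Complex.I * θ * k)‖^d with hf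
  have hcont : Continuous f := by fun_prop
  have ha : 0 < π / n := by positivity
  have ha' : π / n ≤ π / 2 := div_le_div_of_nonneg_left hpi.le (by norm_num) hn2
  show ∫ θ in (0:ℝ)..(π/2), f θ ≤ _
  rw [← intervalIntegral.integral_add_adjacent_intervals (b := π/n) (hcont.intervalIntegrable _ _) (hcont.intervalIntegrable _ _)]
  have hb : 0 < d * ((n:ℝ)^2-1)/6 := by
    have : 0 < (n:ℝ)^2 - 1 := by nlinarith
    positivity
  set b := d * ((n:ℝ)^2-1)/6 with hbdef
  apply add_le_add
  · have p : ∀ θ ∈ Set.Ioc 0 (π/n), f θ ≤ n^d * exp (-b * θ^2) := by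
      intro θ hθ
      have hs : 0 < sin θ := Real.sin_pos_of_pos_of_lt_pi hθ.1 (by linarith [hθ.2])
      have hnθ : n * θ ≤ π := by
        have := hθ.2
        rw [le_div_iff₀ hn0] at this; linarith
      have h1 := dirichlet n θ
      have h2 := euler_bound n (by omega) θ hθ.1.le hnθ
      rw [abs_of_pos hs, abs_of_nonneg (Real.sin_nonneg_of_nonneg_of_le_pi (by have := hθ.1; positivity) hnθ)] at h1
      have h3 : ‖∑ k ∈ Finset.Icc 1 n, Complex.exp (2 * Complex.I * θ * k)‖ ≤ n * exp (-(((n:ℝ)^2 - 1) * θ^2 / 6)) := by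
        refine le_of_mul_le_mul_right ?_ hs
        rw [h1]; linarith
      have h4 := pow_le_pow_left₀ (norm_nonneg _) h3 d
      rw [mul_pow, ← Real.exp_nat_mul] at h4
      refine h4.trans (le_of_eq ?_)
      rw [hbdef]; congr 2; ring
    have hi : MeasureTheory.IntegrableOn (fun θ : ℝ => (n:ℝ)^d * exp (-b * θ^2)) (Set.Ioi 0) :=
      ((integrable_exp_neg_mul_sq hb).const_mul _).integrableOn
    rw [intervalIntegral.integral_of_le ha.le, ← integral_gaussian_Ioi, ← MeasureTheory.integral_const_mul]
    calc ∫ θ in Set.Ioc 0 (π/n), f θ ≤ ∫ θ in Set.Ioc 0 (π/n), n^d * exp (-b * θ^2) := by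
          refine MeasureTheory.setIntegral_mono_on ?_ (hi.mono_set Set.Ioc_subset_Ioi_self) measurableSet_Ioc p
          exact (hcont.intervalIntegrable 0 (π/n)).1
      _ ≤ _ := by
          refine MeasureTheory.setIntegral_mono_set hi ?_ (Filter.Eventually.of_forall Set.Ioc_subset_Ioi_self)
          exact Filter.Eventually.of_forall fun θ => by positivity
  · have hs : ∀ θ ∈ Set.Icc (π/n) (π/2), 2 / n ≤ sin θ := by
      intro θ hθ
      have := Real.mul_le_sin (ha.le.trans hθ.1) hθ.2
      refine le_trans ?_ this
      have := mul_le_mul_of_nonneg_left hθ.1 (show 0 ≤ 2/π by positivity)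
      refine le_trans (le_of_eq ?_) this
      field_simp
    have h2n : 0 < 2 / (n:ℝ) := by positivity
    have p : ∀ θ ∈ Set.Icc (π/n) (π/2), f θ ≤ ((n:ℝ)/2)^(d-4) * (1 / sin θ)^4 := by
      intro θ hθ
      have h := hs θ hθ
      have hs0 : 0 < sin θ := by linarith
      have h1 := dirichlet n θ
      rw [abs_of_pos hs0] at h1
      have h3 : ‖∑ k ∈ Finset.Icc 1 n, Complex.exp (2 * Complex.I * θ * k)‖ ≤ 1 / sin θ := by
        rw [le_div_iff₀ hs0, h1]; exact Real.abs_sin_le_one _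
      have h4 : 1 / sin θ ≤ (n:ℝ)/2 := by
        rw [div_le_div_iff₀ hs0 (by norm_num)]
        rw [div_le_iff₀ hn0] at h; linarith
      have h5 := pow_le_pow_left₀ (norm_nonneg _) h3 d
      refine h5.trans ?_
      rw [show (1 / sin θ)^d = (1 / sin θ)^(d-4) * (1 / sin θ)^4 by rw [← pow_add]; congr 1; omega]
      have := pow_le_pow_left₀ (show 0 ≤ 1 / sin θ by positivity) h4 (d-4)
      gcongr
    have hm := intervalIntegral.integral_mono_on (μ := MeasureTheory.volume) ha' (hcont.intervalIntegrable _ _) 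
      (g := fun θ => ((n:ℝ)/2)^(d-4) * (1 / sin θ)^4) ?_ p
    · refine hm.trans ?_
      rw [intervalIntegral.integral_const_mul]
      have := tail_int (π/n) ha ha'
      refine mul_le_mul_of_nonneg_left (this.trans (le_of_eq ?_)) (by positivity)
      field_simp
    · apply ContinuousOn.intervalIntegrable
      rw [Set.uIcc_of_le ha']
      refine ContinuousOn.mul continuousOn_const (ContinuousOn.pow (ContinuousOn.div continuousOn_const Real.continuous_sin.continuousOn fun θ h => ?_) 4)
      have := hs θ h
      linarith

lemma big_case (n d : ℕ) (hn : 2 ≤ n) (hd : 4 ≤ d) (t : ℤ) :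
    (((Fintype.piFinset (fun _ : Fin d => Finset.Icc 1 n)).filter
        (fun x : Fin d → ℕ => (∑ i, (x i : ℤ)) = t)).card : ℝ)
      ≤ ((n : ℝ) + d - 2) ^ (d - 1) * Real.sqrt (2 / d) := by
  have hF := count_fourier n d t
  rw [fold_int] at hF
  have hM := main_int n d hn hd
  generalize (((Fintype.piFinset (fun _ : Fin d => Finset.Icc 1 n)).filter
        (fun x : Fin d → ℕ => (∑ i, (x i : ℤ)) = t)).card : ℝ) = N at *
  have hpi := Real.pi_gt_d2
  have hpi0 := Real.pi_pos
  have hn2 : (2:ℝ) ≤ n := by exact_mod_cast hn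
  obtain ⟨m, rfl⟩ : ∃ m, d = m + 4 := ⟨d - 4, by omega⟩
  simp only [Nat.add_sub_cancel, show m + 4 - 1 = m + 3 by omega] at *
  set x : ℝ := (n : ℝ) with hx
  have hx0 : 0 < x := by linarith
  have hm0 : (0:ℝ) ≤ m := Nat.cast_nonneg m
  set D : ℝ := ((m + 4 : ℕ) : ℝ) with hD
  have hDm : D = m + 4 := by rw [hD]; push_cast; ring
  have hD0 : 0 < D := by linarith
  set c := √(2 / D) with hc
  have hc0 : 0 < c := by rw [hc]; positivity
  have hx1 : 0 < x^2 - 1 := by nlinarith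
  have A : √(π / (D * (x^2-1)/6)) ≤ c * (π * (0.978 * (1 + 1/x)) / x) := by
    rw [hc, Real.sqrt_le_left (by positivity), mul_pow, Real.sq_sqrt (by positivity)]
    rw [show π / (D * (x^2-1)/6) = 2 / D * (3 * π / (x^2-1)) by field_simp; norm_num]
    refine mul_le_mul_of_nonneg_left ?_ (by positivity)
    rw [show (π * (0.978 * (1 + 1/x)) / x)^2 = π * (π * 0.978^2) * (x+1)^2/x^4 by field_simp]
    rw [div_le_div_iff₀ hx1 (by positivity)]
    have h1 : x^4 ≤ (x+1)^2 * (x^2-1) := by nlinarith [mul_pos hx0 hx1]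
    have h2 : 3 ≤ π * 0.978^2 := by nlinarith
    calc 3 * π * x^4 ≤ (π * 0.978^2) * π * ((x+1)^2 * (x^2-1)) := by gcongr
      _ = _ := by ring
  have B : (1/2:ℝ)^m ≤ 1.42 * c := by
    have : (1/2:ℝ)^m / 1.42 ≤ c := by
      apply Real.le_sqrt_of_sq_le
      have h4 := one_add_mul_le_pow (show (-2:ℝ) ≤ 3 by norm_num) m
      norm_num at h4
      rw [div_pow, ← pow_mul, mul_comm m 2, pow_mul, div_le_div_iff₀ (by positivity) hD0, hDm]
      have : (((1/2:ℝ)^2)^m) * 4^m = 1 := by rw [← mul_pow]; norm_num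
      have hp : 0 < ((1/2:ℝ)^2)^m := by positivity
      nlinarith
    rw [div_le_iff₀ (by norm_num)] at this
    linarith
  have T1 : x / π + x^3/(3*π^3) ≤ 0.3185 * x + 0.0108 * x^3 := by
    have p3 : (3.14:ℝ)^3 ≤ π^3 := by gcongr
    have a1 : x / π ≤ 0.3185 * x := by
      rw [div_le_iff₀ hpi0]; nlinarith
    have a2 : x^3/(3*π^3) ≤ 0.0108 * x^3 := by
      rw [div_le_iff₀ (by positivity)]
      have : 0 < x^3 := by positivity
      nlinarith
    linarith
  have T2 : (x/2)^m * (x / π + x^3/(3*π^3)) ≤ c * x^m * (1.42 * (0.3185 * x + 0.0108 * x^3)) := by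
    calc (x/2)^m * (x / π + x^3/(3*π^3)) = x^m * (1/2)^m * (x / π + x^3/(3*π^3)) := by
          rw [← mul_pow]; ring
      _ ≤ x^m * (1.42 * c) * (0.3185 * x + 0.0108 * x^3) := by gcongr
      _ = _ := by ring
  have M : x^(m+4) * √(π / (D * (x^2-1)/6)) ≤ c * x^m * (π * 0.978 * (x^3 + x^2)) := by
    calc x^(m+4) * √(π / (D * (x^2-1)/6)) ≤ x^(m+4) * (c * (π * (0.978 * (1 + 1/x)) / x)) := by gcongr
      _ = _ := by field_simp; ring
  have R : x^m * (x+2)^3 ≤ (x + D - 2)^(m+3) := by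
    rw [pow_add (x + D - 2)]
    have : x + 2 ≤ x + D - 2 := by linarith
    have : x ≤ x + D - 2 := by linarith
    have h00 : 0 ≤ (x + D - 2)^m := pow_nonneg (by linarith) m
    gcongr
  have F : 2 * (1.42 * (0.3185 * x + 0.0108 * x^3)) + π * 0.978 * (x^3 + x^2) ≤ π * (x+2)^3 := by
    have : 0 < x^3 := by positivity
    have : 0 < x^2 := by positivity
    nlinarith
  have F' := mul_le_mul_of_nonneg_left F (show 0 ≤ c * x^m by positivity)
  have R' := mul_le_mul_of_nonneg_left R (show 0 ≤ c * π by positivity)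
  have : π * N ≤ π * ((x + D - 2)^(m+3) * c) := by nlinarith
  exact le_of_mul_le_mul_left this hpi0

/-- The number of lattice points of `{1, …, n}^d` lying on the hyperplane
`x₁ + ⋯ + x_d = t` is at most `(n + d - 2)^(d-1) · √(2/d)`. -/
theorem cube_hyperplane_section_bound (n d : ℕ) (hn : 1 ≤ n) (hd : 1 ≤ d) (t : ℤ) :
    (((Fintype.piFinset (fun _ : Fin d => Finset.Icc 1 n)).filter
        (fun x : Fin d → ℕ => (∑ i, (x i : ℤ)) = t)).card : ℝ)
      ≤ ((n : ℝ) + d - 2) ^ (d - 1) * Real.sqrt (2 / d) := by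
  obtain rfl | rfl | rfl | hd4 : d = 1 ∨ d = 2 ∨ d = 3 ∨ 4 ≤ d := by omega
  · have h : ((Fintype.piFinset (fun _ : Fin 1 => Finset.Icc 1 n)).filter
        (fun x : Fin 1 → ℕ => (∑ i, (x i : ℤ)) = t)).card ≤ 1 := by
      rw [Finset.card_le_one]
      intro x hx y hy
      simp at hx hy
      ext i
      fin_cases i
      show x 0 = y 0
      omega
    have h' : (((Fintype.piFinset (fun _ : Fin 1 => Finset.Icc 1 n)).filter
        (fun x : Fin 1 → ℕ => (∑ i, (x i : ℤ)) = t)).card : ℝ) ≤ 1 := by exact_mod_cast h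
    refine h'.trans ?_
    norm_num
  · have h' : (((Fintype.piFinset (fun _ : Fin 2 => Finset.Icc 1 n)).filter
        (fun x : Fin 2 → ℕ => (∑ i, (x i : ℤ)) = t)).card : ℝ) ≤ n := by
      exact_mod_cast card_two n t
    refine h'.trans ?_
    norm_num
  · have h' : 4 * (((Fintype.piFinset (fun _ : Fin 3 => Finset.Icc 1 n)).filter
        (fun x : Fin 3 → ℕ => (∑ i, (x i : ℤ)) = t)).card : ℝ) ≤ 3 * n^2 + 1 := by
      exact_mod_cast card_three n t
    have hs : (0.8:ℝ) ≤ √(2 / (3:ℕ)) := by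
      apply Real.le_sqrt_of_sq_le; norm_num
    have hn' : (1:ℝ) ≤ n := by exact_mod_cast hn
    have h2 := mul_le_mul_of_nonneg_left hs (show 0 ≤ ((n:ℝ) + (3:ℕ) - 2)^(3-1) from sq_nonneg _)
    refine le_trans ?_ h2
    norm_num
    nlinarith
  · rcases eq_or_lt_of_le hn with h1 | h2
    · subst h1
      have h : ((Fintype.piFinset (fun _ : Fin d => Finset.Icc 1 1)).filter
        (fun x : Fin d → ℕ => (∑ i, (x i : ℤ)) = t)).card ≤ 1 := by
        refine (Finset.card_filter_le _ _).trans ?_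
        simp
      have h' : (((Fintype.piFinset (fun _ : Fin d => Finset.Icc 1 1)).filter
        (fun x : Fin d → ℕ => (∑ i, (x i : ℤ)) = t)).card : ℝ) ≤ 1 := by exact_mod_cast h
      refine h'.trans ?_
      have hd' : (4:ℝ) ≤ d := by exact_mod_cast hd4
      have a : (d:ℝ) - 1 ≤ (((1:ℕ):ℝ) + d - 2)^(d-1) := by
        have := le_self_pow₀ (show (1:ℝ) ≤ d - 1 by linarith) (show d - 1 ≠ 0 by omega)
        refine this.trans (le_of_eq ?_)
        congr 1
        push_cast; ring
      have b : 1 / ((d:ℝ) - 1) ≤ √(2/d) := by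
        apply Real.le_sqrt_of_sq_le
        rw [div_pow, div_le_div_iff₀ (by nlinarith) (by linarith)]
        nlinarith
      have hp : 0 < (d:ℝ) - 1 := by linarith
      calc (1:ℝ) = (d - 1) * (1 / (d - 1)) := by field_simp
        _ ≤ _ := mul_le_mul a b (by positivity) (hp.le.trans a)
    · exact big_case n d h2 hd4 t
end

section
/- Let d ≥ 1 and let X be a set of n ≥ d positive integers. Order the d-element subsets of X by: B ≤ C if and only if, writing B = {b_1 < b_2 < ... < b_d} and C = {c_1 < c_2 < ... < c_d} in increasing order, b_i ≤ c_i for all 1 ≤ i ≤ d. Then every antichain U in this partial order satisfies |U| ≤ (1/d!)·(n+d-2)^{d-1}·√(2/d). -/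
/-- The `i`-th smallest element of a finset of naturals (0-indexed; junk value `0` if
`i` is out of range). -/
def kthSmallest (B : Finset ℕ) (i : ℕ) : ℕ :=
  (B.sort (· ≤ ·)).getD i 0

/-- The partial order on `d`-element subsets: `B ≤ C` iff for each `i < d`, the `i`-th
smallest element of `B` is at most the `i`-th smallest element of `C`. -/
def SubsetLE (d : ℕ) (B C : Finset ℕ) : Prop :=
  ∀ i < d, kthSmallest B i ≤ kthSmallest C i


theorem scd_exists (m d : ℕ) : ∃ κ : (Fin d → ℕ) → List ℕ,
    (∀ x y : Fin d → ℕ, (∀ i, x i ≤ m) → (∀ i, y i ≤ m) → κ x = κ y →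
      ∑ i, x i ≤ ∑ i, y i → x ≤ y) ∧
    (∀ x : Fin d → ℕ, (∀ i, x i ≤ m) →
      (κ x).sum ≤ ∑ i, x i ∧ ∑ i, x i + (κ x).sum ≤ d * m ∧
      ∀ r, (κ x).sum ≤ r → r + (κ x).sum ≤ d * m →
        ∃ y : Fin d → ℕ, (∀ i, y i ≤ m) ∧ κ y = κ x ∧ ∑ i, y i = r) := by
  induction d with
  | zero =>
    refine ⟨fun _ => [], ?_, ?_⟩
    · intro x y _ _ _ _ i
      exact i.elim0
    · intro x _
      simp
  | succ d ih =>
    obtain ⟨κ, h1, h2⟩ := ih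
    refine ⟨fun x => min (x 0) (d * m - (κ (Fin.tail x)).sum - ∑ i, Fin.tail x i)
      :: κ (Fin.tail x), ?_, ?_⟩
    · intro x y hx hy hk hr
      simp only [List.cons.injEq] at hk
      obtain ⟨hj, hk⟩ := hk
      have ex : ∑ i, x i = x 0 + ∑ i, Fin.tail x i := Fin.sum_univ_succ x
      have ey : ∑ i, y i = y 0 + ∑ i, Fin.tail y i := Fin.sum_univ_succ y
      rw [ex, ey] at hr
      have hx' : ∀ i, Fin.tail x i ≤ m := fun i => hx _
      have hy' : ∀ i, Fin.tail y i ≤ m := fun i => hy _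
      obtain ⟨a1, a2, -⟩ := h2 _ hx'
      obtain ⟨b1, b2, -⟩ := h2 _ hy'
      rw [hk] at a1 a2 hj
      have key : x 0 ≤ y 0 ∧ ∑ i, Fin.tail x i ≤ ∑ i, Fin.tail y i := by omega
      have := h1 _ _ hx' hy' hk key.2
      intro i
      refine Fin.cases key.1 (fun j => this j) i
    · intro x hx
      have hx' : ∀ i, Fin.tail x i ≤ m := fun i => hx _
      have ex : ∑ i, x i = x 0 + ∑ i, Fin.tail x i := Fin.sum_univ_succ x
      obtain ⟨a1, a2, a3⟩ := h2 _ hx'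
      have hx0 := hx 0
      have e : (d + 1) * m = d * m + m := by ring
      rw [ex, e]
      simp only [List.sum_cons]
      generalize hj : min (x 0) (d * m - (κ (Fin.tail x)).sum - ∑ i, Fin.tail x i) = j
      refine ⟨by omega, by omega, ?_⟩
      intro r hr1 hr2
      have main : ∃ v q, v ≤ m ∧ (κ (Fin.tail x)).sum ≤ q ∧ q + (κ (Fin.tail x)).sum ≤ d * m ∧
          v + q = r ∧ min v (d * m - (κ (Fin.tail x)).sum - q) = j := by
        by_cases hc : r + (κ (Fin.tail x)).sum ≤ d * m
        · exact ⟨j, r - j, by omega, by omega, by omega, by omega, by omega⟩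
        · exact ⟨r - (d * m - (κ (Fin.tail x)).sum - j), d * m - (κ (Fin.tail x)).sum - j,
            by omega, by omega, by omega, by omega, by omega⟩
      obtain ⟨v, q, hv, hq1, hq2, hvq, hmin⟩ := main
      obtain ⟨y, hy, hky, hsy⟩ := a3 q hq1 hq2
      refine ⟨Fin.cons v y, ?_, ?_, ?_⟩
      · intro i
        refine Fin.cases ?_ (fun k => ?_) i
        · simpa using hv
        · simpa using hy k
      · simp only [Fin.tail_cons, Fin.cons_zero, hky, hsy, hmin]
      · rw [Fin.sum_univ_succ]
        simp [hsy, hvq]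

theorem antichain_le_middle (m d : ℕ) (A : Finset (Fin d → ℕ)) (hA : ∀ x ∈ A, ∀ i, x i ≤ m)
    (hanti : ∀ x ∈ A, ∀ y ∈ A, x ≤ y → x = y) :
    A.card ≤ ((Fintype.piFinset (fun _ : Fin d => Finset.range (m + 1))).filter
      (fun x => ∑ i, x i = d * m / 2)).card := by
  obtain ⟨κ, h1, h2⟩ := scd_exists m d
  have h3 : ∀ x ∈ A, ∃ y : Fin d → ℕ, (∀ i, y i ≤ m) ∧ κ y = κ x ∧ ∑ i, y i = d * m / 2 := by
    intro x hx
    obtain ⟨a1, a2, a3⟩ := h2 x (hA x hx)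
    exact a3 _ (by omega) (by omega)
  choose! φ hφ using h3
  apply Finset.card_le_card_of_injOn φ
  · intro x hx
    have := hφ x hx
    simp only [Finset.coe_filter, Fintype.mem_piFinset, Finset.mem_range, Set.mem_ofPred_eq]
    exact ⟨fun i => Nat.lt_succ_of_le (this.1 i), this.2.2⟩
  · intro x hx y hy hxy
    have hk : κ x = κ y := by rw [← (hφ x hx).2.1, ← (hφ y hy).2.1, hxy]
    rcases le_total (∑ i, x i) (∑ i, y i) with h | h
    · exact hanti x hx y hy (h1 x y (hA x hx) (hA y hy) hk h)
    · exact (hanti y hy x hx (h1 y x (hA y hy) (hA x hx) hk.symm h)).symm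

theorem sorted_le_of_perm_le {d : ℕ} (b c : Fin d → ℕ) (hb : StrictMono b) (hc : StrictMono c)
    (σ τ : Equiv.Perm (Fin d)) (h : ∀ k, b (σ k) ≤ c (τ k)) : b ≤ c := by
  intro i
  by_contra hlt
  have hsub : ∀ k, τ k ≤ i → σ k < i := by
    intro k hk
    have h1 := h k
    have h2 := hc.monotone hk
    have h3 : b (σ k) < b i := (h1.trans h2).trans_lt (not_le.1 hlt)
    exact hb.lt_iff_lt.1 h3
  have : (Finset.univ.filter (fun k => τ k ≤ i)).card ≤ (Finset.univ.filter (fun k => σ k < i)).card := by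
    apply Finset.card_le_card
    intro k hk
    simp only [Finset.mem_filter, Finset.mem_univ, true_and] at hk ⊢
    exact hsub k hk
  have e1 : (Finset.univ.filter (fun k => τ k ≤ i)).card = (Finset.Iic i).card := by
    rw [← Finset.card_map τ.toEmbedding]
    congr 1
    ext k
    simp
  have e2 : (Finset.univ.filter (fun k => σ k < i)).card = (Finset.Iio i).card := by
    rw [← Finset.card_map σ.toEmbedding]
    congr 1
    ext k
    simp
  rw [e1, e2] at this
  simp at this

theorem reduction (d n : ℕ) (X : Finset ℕ) (hcard : X.card = n) (hn : 1 ≤ n)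
    (U : Finset (Finset ℕ)) (hU : U ⊆ X.powersetCard d)
    (hanti : IsAntichain (SubsetLE d) (U : Set (Finset ℕ))) :
    ∃ A : Finset (Fin d → ℕ), A.card = d.factorial * U.card ∧ (∀ x ∈ A, ∀ i, x i ≤ n - 1) ∧
      (∀ x ∈ A, ∀ y ∈ A, x ≤ y → x = y) := by
  classical
  let idx : ℕ → ℕ := fun x => (X.filter (· < x)).card
  have idx_mono : ∀ x ∈ X, ∀ y, x < y → idx x < idx y := by
    intro x hx y hxy
    apply Finset.card_lt_card
    rw [Finset.ssubset_iff_of_subset]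
    · exact ⟨x, by simp [hx, hxy], by simp⟩
    · intro z hz
      simp only [Finset.mem_filter] at hz ⊢
      exact ⟨hz.1, by omega⟩
  have idx_lt : ∀ x ∈ X, idx x ≤ n - 1 := by
    intro x hx
    have : idx x < X.card := by
      apply Finset.card_lt_card
      rw [Finset.ssubset_iff_of_subset (Finset.filter_subset _ _)]
      exact ⟨x, hx, by simp⟩
    omega
  let b : Finset ℕ → Fin d → ℕ := fun B i => kthSmallest B i
  have hb : ∀ B ∈ U, StrictMono (b B) ∧ ∀ i, b B i ∈ B := by
    intro B hB
    have hBc : B.card = d := (Finset.mem_powersetCard.1 (hU hB)).2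
    have e : ∀ i, b B i = B.orderEmbOfFin hBc i := by
      intro i
      simp only [b, kthSmallest]
      rw [Finset.orderEmbOfFin_apply, List.getD_eq_getElem]
      rfl
    constructor
    · intro i j hij
      rw [e, e]
      exact (B.orderEmbOfFin hBc).strictMono hij
    · intro i
      rw [e]
      exact Finset.orderEmbOfFin_mem _ _ _
  have hbX : ∀ B ∈ U, ∀ i, b B i ∈ X := fun B hB i =>
    (Finset.mem_powersetCard.1 (hU hB)).1 ((hb B hB).2 i)
  have hbs : ∀ B ∈ U, StrictMono (fun i => idx (b B i)) := fun B hB i j hij =>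
    idx_mono _ (hbX B hB i) _ ((hb B hB).1 hij)
  let F : Finset ℕ × Equiv.Perm (Fin d) → Fin d → ℕ := fun p k => idx (b p.1 (p.2 k))
  have key : ∀ p ∈ U ×ˢ (Finset.univ : Finset (Equiv.Perm (Fin d))),
      ∀ q ∈ U ×ˢ (Finset.univ : Finset (Equiv.Perm (Fin d))), F p ≤ F q → p = q := by
    rintro ⟨B, σ⟩ hp ⟨C, τ⟩ hq hle
    have hB : B ∈ U := by simpa using hp
    have hC : C ∈ U := by simpa using hq
    have h1 := sorted_le_of_perm_le _ _ (hbs B hB) (hbs C hC) σ τ hle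
    have hBC : B = C := by
      by_contra hne
      refine hanti hB hC hne ?_
      intro i hi
      have h2 := h1 ⟨i, hi⟩
      by_contra hlt
      push Not at hlt
      have := idx_mono _ (hbX C hC ⟨i, hi⟩) (b B ⟨i, hi⟩) hlt
      simp only at h2
      omega
    subst hBC
    have h3 : ∀ k, σ k ≤ τ k := fun k => (hbs B hB).le_iff_le.1 (hle k)
    have h4 : σ = τ := by
      have hs : ∑ k, ((σ k : Fin d) : ℕ) = ∑ k, ((τ k : Fin d) : ℕ) := by
        rw [Equiv.sum_comp σ (fun k : Fin d => (k : ℕ)), Equiv.sum_comp τ (fun k : Fin d => (k : ℕ))]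
      have := (Finset.sum_eq_sum_iff_of_le (fun k _ => Fin.le_def.1 (h3 k))).1 hs
      ext k
      exact this k (Finset.mem_univ _)
    rw [h4]
  refine ⟨(U ×ˢ (Finset.univ : Finset (Equiv.Perm (Fin d)))).image F, ?_, ?_, ?_⟩
  · rw [Finset.card_image_of_injOn]
    · rw [Finset.card_product, Finset.card_univ, Fintype.card_perm, Fintype.card_fin, mul_comm]
    · intro p hp q hq h
      exact key p hp q hq h.le
  · intro x hx i
    obtain ⟨⟨B, σ⟩, hp, rfl⟩ := Finset.mem_image.1 hx
    have hB : B ∈ U := by simpa using hp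
    exact idx_lt _ (hbX B hB _)
  · intro x hx y hy hxy
    obtain ⟨p, hp, rfl⟩ := Finset.mem_image.1 hx
    obtain ⟨q, hq, rfl⟩ := Finset.mem_image.1 hy
    rw [key p hp q hq hxy]


open Complex in
theorem exp_integral (k : ℤ) :
    ∫ t in (0:ℝ)..Real.pi, cexp (2 * k * I * t) = if k = 0 then (Real.pi : ℂ) else 0 := by
  split_ifs with h
  · simp [h]
  · have hk : (2 * k * I : ℂ) ≠ 0 := by
      simp [h]
    rw [integral_exp_mul_complex hk]
    have : (2 * k * I * Real.pi : ℂ) = k * (2 * Real.pi * I) := by ring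
    rw [this, Complex.exp_int_mul_two_pi_mul_I]
    simp

open Complex in
theorem sum_exp_integral {ι : Type*} (S : Finset ι) (w : ι → ℤ) :
    ∫ t in (0:ℝ)..Real.pi, ∑ i ∈ S, cexp (2 * w i * I * t) =
      Real.pi * ((S.filter (fun i => w i = 0)).card : ℂ) := by
  rw [intervalIntegral.integral_finsetSum]
  · simp_rw [exp_integral]
    rw [← Finset.sum_filter, Finset.sum_const, nsmul_eq_mul, mul_comm]
  · intro i _
    apply Continuous.intervalIntegrable
    fun_prop

/-- Dirichlet-type kernel. -/
noncomputable def dker (n : ℕ) (t : ℝ) : ℂ := ∑ j ∈ Finset.range n, Complex.exp (2 * j * Complex.I * t)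

theorem dker_continuous (n : ℕ) : Continuous (dker n) := by
  unfold dker
  fun_prop

open Complex in
theorem count_le_integral (n d s : ℕ) :
    (((Fintype.piFinset (fun _ : Fin d => Finset.range n)).filter
      (fun x => ∑ i, x i = s)).card : ℝ) * Real.pi ≤ ∫ t in (0:ℝ)..Real.pi, ‖dker n t‖ ^ d := by
  have h := sum_exp_integral (Fintype.piFinset (fun _ : Fin d => Finset.range n))
    (fun x => ∑ i, (x i : ℤ) - s)
  have e : ∀ t : ℝ, ∑ x ∈ Fintype.piFinset (fun _ : Fin d => Finset.range n),
      cexp (2 * ((∑ i, (x i : ℤ) - s : ℤ) : ℂ) * I * t) = dker n t ^ d * cexp ((-(2 * s * t) : ℝ) * I) := by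
    intro t
    have h1 : dker n t ^ d = ∏ _i : Fin d, ∑ j ∈ Finset.range n, cexp (2 * j * I * t) := by
      simp [dker]
    rw [h1, Finset.prod_univ_sum, Finset.sum_mul]
    apply Finset.sum_congr rfl
    intro x _
    rw [← Complex.exp_sum, ← Complex.exp_add]
    congr 1
    push_cast
    rw [← Finset.sum_mul, ← Finset.sum_mul, ← Finset.mul_sum]
    ring
  simp_rw [e] at h
  have hf : ((Fintype.piFinset (fun _ : Fin d => Finset.range n)).filter
      (fun x => ∑ i, (x i : ℤ) - s = 0)) = ((Fintype.piFinset (fun _ : Fin d => Finset.range n)).filter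
      (fun x => ∑ i, x i = s)) := by
    apply Finset.filter_congr
    intro x _
    rw [sub_eq_zero]
    exact_mod_cast Iff.rfl
  rw [hf] at h
  have h2 := congrArg norm h
  rw [norm_mul, Complex.norm_real, Complex.norm_natCast, Real.norm_of_nonneg Real.pi_pos.le] at h2
  rw [mul_comm, ← h2]
  refine (intervalIntegral.norm_integral_le_integral_norm Real.pi_pos.le).trans (le_of_eq ?_)
  apply intervalIntegral.integral_congr
  intro t _
  simp only [norm_mul, norm_pow, Complex.norm_exp_ofReal_mul_I, mul_one]

open Complex in
theorem dker_norm_sq (n : ℕ) (t : ℝ) : ((‖dker n t‖ ^ 2 : ℝ) : ℂ) =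
    ∑ p ∈ Finset.range n ×ˢ Finset.range n, cexp (2 * ((p.1 - p.2 : ℤ) : ℂ) * I * t) := by
  push_cast
  rw [← Complex.mul_conj', Finset.sum_product, dker, map_sum, Finset.sum_mul_sum]
  apply Finset.sum_congr rfl
  intro a _
  apply Finset.sum_congr rfl
  intro b _
  rw [← Complex.exp_conj, ← Complex.exp_add]
  congr 1
  have h2 : (starRingEnd ℂ) 2 = 2 := Complex.conj_ofNat 2
  simp [h2]
  ring

open Complex in
theorem int_two (n : ℕ) : ∫ t in (0:ℝ)..Real.pi, ‖dker n t‖ ^ 2 = Real.pi * n := by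
  have h := sum_exp_integral (Finset.range n ×ˢ Finset.range n) (fun p => (p.1 - p.2 : ℤ))
  simp_rw [← dker_norm_sq] at h
  rw [intervalIntegral.integral_ofReal] at h
  have hc : ((Finset.range n ×ˢ Finset.range n).filter (fun p : ℕ × ℕ => (p.1 - p.2 : ℤ) = 0)).card = n := by
    have : ((Finset.range n ×ˢ Finset.range n).filter (fun p : ℕ × ℕ => (p.1 - p.2 : ℤ) = 0)) =
        (Finset.range n).diag := by
      ext ⟨a, b⟩
      simp only [Finset.mem_filter, Finset.mem_product, Finset.mem_range, Finset.mem_diag]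
      omega
    rw [this, Finset.diag_card, Finset.card_range]
  rw [hc] at h
  exact_mod_cast h

theorem quad_count (n : ℕ) : (((Finset.range n ×ˢ Finset.range n) ×ˢ (Finset.range n ×ˢ Finset.range n)).filter
    (fun p : (ℕ × ℕ) × (ℕ × ℕ) => ((p.1.1 - p.1.2) + (p.2.1 - p.2.2) : ℤ) = 0)).card * 3 ≤ 2 * n ^ 3 + n := by
  rw [Finset.card_filter, Finset.sum_product]
  have h1 : ∀ p ∈ Finset.range n ×ˢ Finset.range n, (∑ q ∈ Finset.range n ×ˢ Finset.range n,
      if ((p.1 - p.2) + (q.1 - q.2) : ℤ) = 0 then 1 else 0) ≤ n - Nat.dist p.1 p.2 := by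
    rintro ⟨a, b⟩ hp
    simp only [Finset.mem_product, Finset.mem_range] at hp
    rw [← Finset.card_filter]
    have : n - Nat.dist a b = (Finset.range (n - Nat.dist a b)).card := by simp
    rw [this]
    apply Finset.card_le_card_of_injOn (fun q : ℕ × ℕ => min q.1 q.2)
    · rintro ⟨c, e⟩ hq
      simp only [Finset.coe_filter, Finset.mem_product, Finset.mem_range, Set.mem_ofPred_eq,
        Finset.coe_range, Set.mem_Iio, Nat.dist] at hq ⊢
      omega
    · rintro ⟨c, e⟩ hq ⟨c', e'⟩ hq' h
      simp only [Finset.coe_filter, Finset.mem_product, Finset.mem_range, Set.mem_ofPred_eq] at hq hq' h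
      simp only [Prod.mk.injEq]
      omega
  refine (Nat.mul_le_mul_right 3 (Finset.sum_le_sum h1)).trans ?_
  rw [Finset.sum_product]
  have hrow : ∀ k n : ℕ, k ≤ n → ∑ b ∈ Finset.range k, 2 * (n - Nat.dist k b) + k * (k + 1) = 2 * k * n := by
    intro k n hkn
    have : ∀ b ∈ Finset.range k, 2 * (n - Nat.dist k b) = 2 * (n - k) + 2 * b := by
      intro b hb
      simp only [Finset.mem_range] at hb
      simp only [Nat.dist]
      omega
    rw [Finset.sum_congr rfl this, Finset.sum_add_distrib, Finset.sum_const,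
      Finset.card_range, smul_eq_mul, ← Finset.mul_sum]
    have := Finset.sum_range_id_mul_two k
    obtain ⟨m, rfl⟩ := Nat.exists_eq_add_of_le hkn
    rcases k with _ | k
    · simp
    · simp only [Nat.add_sub_cancel, Nat.add_sub_cancel_left] at *
      nlinarith
  have hsq : ∀ k n : ℕ, k ≤ n → (∑ a ∈ Finset.range k, ∑ b ∈ Finset.range k, (n - Nat.dist a b)) * 3 + k ^ 3
      = 3 * k ^ 2 * n + k := by
    intro k n
    induction k with
    | zero => simp
    | succ k ih =>
      intro hk
      have ih := ih (by omega)
      have hr := hrow k n (by omega)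
      rw [← Finset.mul_sum] at hr
      rw [Finset.sum_range_succ]
      simp_rw [Finset.sum_range_succ]
      rw [Finset.sum_add_distrib]
      simp_rw [fun x => Nat.dist_comm x k]
      simp only [Nat.dist_self, Nat.sub_zero]
      nlinarith
  have := hsq n n le_rfl
  simp only at this ⊢
  nlinarith

open Complex in
theorem int_four (n : ℕ) : ∫ t in (0:ℝ)..Real.pi, ‖dker n t‖ ^ 4 ≤ Real.pi * ((2 * n ^ 3 + n) / 3) := by
  have h := sum_exp_integral ((Finset.range n ×ˢ Finset.range n) ×ˢ (Finset.range n ×ˢ Finset.range n))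
    (fun p => ((p.1.1 - p.1.2) + (p.2.1 - p.2.2) : ℤ))
  have e : ∀ t : ℝ, ∑ p ∈ (Finset.range n ×ˢ Finset.range n) ×ˢ (Finset.range n ×ˢ Finset.range n),
      cexp (2 * (((p.1.1 - p.1.2) + (p.2.1 - p.2.2) : ℤ) : ℂ) * I * t) = ((‖dker n t‖ ^ 4 : ℝ) : ℂ) := by
    intro t
    have : ‖dker n t‖ ^ 4 = ‖dker n t‖ ^ 2 * ‖dker n t‖ ^ 2 := by ring
    rw [this, Complex.ofReal_mul, dker_norm_sq, Finset.sum_product, Finset.sum_mul_sum]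
    apply Finset.sum_congr rfl
    intro a _
    apply Finset.sum_congr rfl
    intro b _
    rw [← Complex.exp_add]
    congr 1
    push_cast
    ring
  simp_rw [e] at h
  rw [intervalIntegral.integral_ofReal] at h
  have h' : ∫ t in (0:ℝ)..Real.pi, ‖dker n t‖ ^ 4 = Real.pi * ((((Finset.range n ×ˢ Finset.range n) ×ˢ (Finset.range n ×ˢ Finset.range n)).filter
    (fun p : (ℕ × ℕ) × (ℕ × ℕ) => ((p.1.1 - p.1.2) + (p.2.1 - p.2.2) : ℤ) = 0)).card : ℝ) := by
    exact_mod_cast h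
  rw [h']
  apply mul_le_mul_of_nonneg_left _ Real.pi_pos.le
  rw [le_div_iff₀ (by norm_num)]
  exact_mod_cast quad_count n

theorem int_cs (n k : ℕ) : (∫ t in (0:ℝ)..Real.pi, ‖dker n t‖ ^ (k + 1)) ^ 2 ≤
    (∫ t in (0:ℝ)..Real.pi, ‖dker n t‖ ^ k) * (∫ t in (0:ℝ)..Real.pi, ‖dker n t‖ ^ (k + 2)) := by
  have hcont := dker_continuous n
  have hi : ∀ j : ℕ, IntervalIntegrable (fun t => ‖dker n t‖ ^ j) MeasureTheory.volume 0 Real.pi := by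
    intro j
    apply Continuous.intervalIntegrable
    fun_prop
  have := discrim_le_zero (a := ∫ t in (0:ℝ)..Real.pi, ‖dker n t‖ ^ (k + 2))
    (b := -2 * ∫ t in (0:ℝ)..Real.pi, ‖dker n t‖ ^ (k + 1))
    (c := ∫ t in (0:ℝ)..Real.pi, ‖dker n t‖ ^ k) (by
      intro x
      have h0 : 0 ≤ ∫ t in (0:ℝ)..Real.pi, (x * x * ‖dker n t‖ ^ (k + 2) + (-2 * x) * ‖dker n t‖ ^ (k + 1)
          + ‖dker n t‖ ^ k) := by
        apply intervalIntegral.integral_nonneg Real.pi_pos.le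
        intro t _
        have : x * x * ‖dker n t‖ ^ (k + 2) + (-2 * x) * ‖dker n t‖ ^ (k + 1)
          + ‖dker n t‖ ^ k = ‖dker n t‖ ^ k * (x * ‖dker n t‖ - 1) ^ 2 := by ring
        rw [this]
        positivity
      rw [intervalIntegral.integral_add, intervalIntegral.integral_add,
        intervalIntegral.integral_const_mul, intervalIntegral.integral_const_mul] at h0
      · linarith
      · exact (hi _).const_mul _
      · exact (hi _).const_mul _
      · exact ((hi _).const_mul _).add ((hi _).const_mul _)
      · exact hi _)
  rw [discrim] at this
  nlinarith

theorem dker_norm_le (n : ℕ) (t : ℝ) : ‖dker n t‖ ≤ n := by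
  unfold dker
  refine (norm_sum_le _ _).trans ?_
  have : ∀ j ∈ Finset.range n, ‖Complex.exp (2 * j * Complex.I * t)‖ = 1 := by
    intro j _
    have : (2 * j * Complex.I * t : ℂ) = ((2 * j * t : ℝ) : ℂ) * Complex.I := by push_cast; ring
    rw [this, Complex.norm_exp_ofReal_mul_I]
  rw [Finset.sum_congr rfl this]
  simp

open Complex in
theorem norm_exp_two_sub_one (x : ℝ) : ‖cexp (2 * x * I) - 1‖ = 2 * |Real.sin x| := by
  have h : cexp (2 * x * I) - 1 = cexp (x * I) * (2 * I * ((Real.sin x : ℝ) : ℂ)) := by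
    have e1 : cexp (2 * x * I) = cexp (x * I) * cexp (x * I) := by
      rw [← Complex.exp_add]; congr 1; ring
    have e2 : cexp (x * I) = Complex.cos x + Complex.sin x * I := Complex.exp_mul_I _
    rw [e1, e2, Complex.ofReal_sin]
    have h3 := Complex.sin_sq_add_cos_sq (x : ℂ)
    have h4 : I ^ 2 = -1 := Complex.I_sq
    linear_combination (-Complex.sin x ^ 2) * h4 + h3
  rw [h, norm_mul, Complex.norm_exp_ofReal_mul_I, norm_mul, norm_mul, Complex.norm_real]
  simp

open Complex in
theorem dker_mul_sin (n : ℕ) (t : ℝ) : ‖dker n t‖ * |Real.sin t| = |Real.sin (n * t)| := by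
  have h : dker n t * (cexp (2 * t * I) - 1) = cexp (2 * ((n * t : ℝ) : ℂ) * I) - 1 := by
    have : dker n t = ∑ j ∈ Finset.range n, (cexp (2 * t * I)) ^ j := by
      unfold dker
      apply Finset.sum_congr rfl
      intro j _
      rw [← Complex.exp_nat_mul]
      congr 1
      ring
    rw [this, geom_sum_mul, ← Complex.exp_nat_mul]
    congr 2
    push_cast
    ring
  have h2 := congrArg norm h
  rw [norm_mul, norm_exp_two_sub_one, norm_exp_two_sub_one] at h2
  linarith

theorem sin_ratio (n : ℕ) (hn : 1 ≤ n) (x : ℝ) (hx : 0 ≤ x) (hnx : n * x ≤ 1) :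
    Real.sin (Real.pi * (n * x)) ≤
      n * Real.sin (Real.pi * x) * Real.exp (-((n:ℝ) ^ 2 - 1) * (Real.pi * x) ^ 2 / 6) := by
  have hn' : (1:ℝ) ≤ n := by exact_mod_cast hn
  have hx1 : x ≤ 1 := by nlinarith
  have h1 := Real.tendsto_euler_sin_prod (n * x)
  have h2 := Real.tendsto_euler_sin_prod x
  have hz : HasSum (fun k : ℕ => (1:ℝ) / ((k:ℝ) + 1) ^ 2) (Real.pi ^ 2 / 6) := by
    have := (hasSum_nat_add_iff' (f := fun n : ℕ => (1 : ℝ) / (n : ℝ) ^ 2) 1).2 hasSum_zeta_two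
    simpa using this
  have h3 := (hz.tendsto_sum_nat.const_mul (-((n:ℝ) ^ 2 - 1) * x ^ 2)).rexp
  have h4 := (h2.const_mul (n:ℝ)).mul h3
  have e : -((n:ℝ) ^ 2 - 1) * (Real.pi * x) ^ 2 / 6 = -((n:ℝ) ^ 2 - 1) * x ^ 2 * (Real.pi ^ 2 / 6) := by ring
  rw [e]
  refine le_of_tendsto_of_tendsto' h1 h4 ?_
  intro N
  rw [Finset.mul_sum, Real.exp_sum]
  have key : ∏ j ∈ Finset.range N, (1 - (n * x) ^ 2 / ((j:ℝ) + 1) ^ 2) ≤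
      ∏ j ∈ Finset.range N, ((1 - x ^ 2 / ((j:ℝ) + 1) ^ 2) *
        Real.exp (-((n:ℝ) ^ 2 - 1) * x ^ 2 * (1 / ((j:ℝ) + 1) ^ 2))) := by
    apply Finset.prod_le_prod
    · intro j _
      have hj : (1:ℝ) ≤ ((j:ℝ) + 1) ^ 2 := by
        have : (0:ℝ) ≤ j := Nat.cast_nonneg j
        nlinarith
      rw [sub_nonneg, div_le_one (by linarith)]
      have : 0 ≤ n * x := by positivity
      nlinarith
    · intro j _
      have hj : (1:ℝ) ≤ ((j:ℝ) + 1) ^ 2 := by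
        have : (0:ℝ) ≤ j := Nat.cast_nonneg j
        nlinarith
      have e1 : (n * x) ^ 2 / ((j:ℝ) + 1) ^ 2 = n ^ 2 * (x ^ 2 / ((j:ℝ) + 1) ^ 2) := by ring
      have e2 : -((n:ℝ) ^ 2 - 1) * x ^ 2 * (1 / ((j:ℝ) + 1) ^ 2) =
        -((n:ℝ) ^ 2 - 1) * (x ^ 2 / ((j:ℝ) + 1) ^ 2) := by ring
      rw [e1, e2]
      have ha0 : 0 ≤ x ^ 2 / ((j:ℝ) + 1) ^ 2 := by positivity
      have ha1 : x ^ 2 / ((j:ℝ) + 1) ^ 2 ≤ 1 := by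
        rw [div_le_one (by linarith)]
        nlinarith
      generalize x ^ 2 / ((j:ℝ) + 1) ^ 2 = a at ha0 ha1
      have h5 := Real.add_one_le_exp (-((n:ℝ) ^ 2 - 1) * a)
      have hn2 : 0 ≤ (n:ℝ) ^ 2 - 1 := by nlinarith
      have h6 := mul_le_mul_of_nonneg_left h5 (sub_nonneg.2 ha1)
      refine le_trans ?_ h6
      nlinarith [mul_nonneg hn2 (mul_nonneg ha0 ha0)]
  rw [Finset.prod_mul_distrib] at key
  have h7 := mul_le_mul_of_nonneg_left key (by positivity : 0 ≤ Real.pi * (n * x))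
  refine h7.trans (le_of_eq ?_)
  ring

theorem dker_gauss (n : ℕ) (hn : 2 ≤ n) (t : ℝ) (ht : 0 ≤ t) (hnt : t ≤ Real.pi / n) :
    ‖dker n t‖ ≤ n * Real.exp (-((n:ℝ) ^ 2 - 1) * t ^ 2 / 6) := by
  have hn' : (2:ℝ) ≤ n := by exact_mod_cast hn
  have hpi := Real.pi_pos
  rcases ht.eq_or_lt with rfl | ht
  · simpa using dker_norm_le n 0
  have hnt' : n * t ≤ Real.pi := by
    rw [le_div_iff₀ (by linarith)] at hnt
    linarith
  have hs : 0 < Real.sin t := Real.sin_pos_of_pos_of_lt_pi ht (by nlinarith)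
  have hns : 0 ≤ Real.sin (n * t) := Real.sin_nonneg_of_nonneg_of_le_pi (by positivity) hnt'
  have h := dker_mul_sin n t
  rw [abs_of_pos hs, abs_of_nonneg hns] at h
  have h2 := sin_ratio n (by omega) (t / Real.pi) (by positivity) (by
    rw [← mul_div_assoc, div_le_one hpi]; exact hnt')
  have e1 : Real.pi * (t / Real.pi) = t := by field_simp
  have e2 : Real.pi * (n * (t / Real.pi)) = n * t := by field_simp
  rw [e1, e2, ← h] at h2
  refine le_of_mul_le_mul_right ?_ hs
  linarith

theorem dker_tail (n : ℕ) (t : ℝ) (ht : 0 < t) (hnt : t ≤ Real.pi / 2) :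
    ‖dker n t‖ ≤ (Real.pi / 2) * t⁻¹ := by
  have hpi := Real.pi_pos
  have hs : 2 / Real.pi * t ≤ Real.sin t := Real.mul_le_sin ht.le hnt
  have hs0 : 0 < 2 / Real.pi * t := by positivity
  have h := dker_mul_sin n t
  rw [abs_of_pos (by linarith)] at h
  have h1 := Real.abs_sin_le_one (n * t)
  have h2 : ‖dker n t‖ * (2 / Real.pi * t) ≤ 1 :=
    (mul_le_mul_of_nonneg_left hs (norm_nonneg _)).trans (by linarith)
  have h3 : (Real.pi / 2) * t⁻¹ = 1 / (2 / Real.pi * t) := by field_simp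
  rw [h3, le_div_iff₀ hs0]
  exact h2

theorem dker_symm (n : ℕ) (t : ℝ) : ‖dker n (Real.pi - t)‖ = ‖dker n t‖ := by
  rw [← Complex.norm_conj (dker n t)]
  congr 1
  unfold dker
  rw [map_sum]
  apply Finset.sum_congr rfl
  intro j _
  rw [← Complex.exp_conj]
  have h2 : (starRingEnd ℂ) 2 = 2 := Complex.conj_ofNat 2
  have : (2 * j * Complex.I * ((Real.pi - t : ℝ) : ℂ)) =
    (starRingEnd ℂ) (2 * j * Complex.I * t) + j * (2 * Real.pi * Complex.I) := by
    simp [h2]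
    ring
  rw [this, Complex.exp_add, Complex.exp_nat_mul_two_pi_mul_I, mul_one]

theorem int_half (n d : ℕ) : ∫ t in (0:ℝ)..Real.pi, ‖dker n t‖ ^ d =
    2 * ∫ t in (0:ℝ)..(Real.pi / 2), ‖dker n t‖ ^ d := by
  have hcont := dker_continuous n
  have hi : ∀ a b, IntervalIntegrable (fun t => ‖dker n t‖ ^ d) MeasureTheory.volume a b := by
    intro a b
    apply Continuous.intervalIntegrable
    fun_prop
  rw [← intervalIntegral.integral_add_adjacent_intervals (hi 0 (Real.pi / 2)) (hi (Real.pi / 2) Real.pi)]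
  have h := intervalIntegral.integral_comp_sub_left (a := 0) (b := Real.pi / 2)
    (fun t => ‖dker n t‖ ^ d) Real.pi
  simp only [dker_symm, sub_zero] at h
  have e : Real.pi - Real.pi / 2 = Real.pi / 2 := by ring
  rw [e] at h
  rw [← h]
  ring

theorem int_main (n d : ℕ) (hn : 2 ≤ n) (hd : 6 ≤ d) :
    ∫ t in (0:ℝ)..(Real.pi / n), ‖dker n t‖ ^ d ≤
      n ^ d * (Real.sqrt (Real.pi / (d * ((n:ℝ) ^ 2 - 1) / 6)) / 2) := by
  have hcont := dker_continuous n
  have hn' : (2:ℝ) ≤ n := by exact_mod_cast hn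
  have hd' : (6:ℝ) ≤ d := by exact_mod_cast hd
  have hpi := Real.pi_pos
  have hb : 0 < d * ((n:ℝ) ^ 2 - 1) / 6 := by
    have : 0 < (n:ℝ) ^ 2 - 1 := by nlinarith
    positivity
  rw [← integral_gaussian_Ioi]
  have hpn : 0 ≤ Real.pi / n := by positivity
  have h1 : ∫ t in (0:ℝ)..(Real.pi / n), ‖dker n t‖ ^ d ≤
      ∫ t in (0:ℝ)..(Real.pi / n), (n:ℝ) ^ d * Real.exp (-(d * ((n:ℝ) ^ 2 - 1) / 6) * t ^ 2) := by
    apply intervalIntegral.integral_mono_on hpn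
    · apply Continuous.intervalIntegrable
      fun_prop
    · apply Continuous.intervalIntegrable
      fun_prop
    · intro t ht
      have := pow_le_pow_left₀ (norm_nonneg _) (dker_gauss n hn t ht.1 ht.2) d
      refine this.trans (le_of_eq ?_)
      rw [mul_pow, ← Real.exp_nat_mul]
      congr 2
      ring
  refine h1.trans ?_
  rw [intervalIntegral.integral_const_mul]
  apply mul_le_mul_of_nonneg_left _ (by positivity)
  rw [intervalIntegral.integral_of_le hpn]
  apply MeasureTheory.setIntegral_mono_set
  · exact (integrable_exp_neg_mul_sq hb).integrableOn
  · exact Filter.Eventually.of_forall (fun t => (Real.exp_pos _).le)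
  · exact (Set.Ioc_subset_Ioi_self).eventuallyLE

theorem int_tail (n d : ℕ) (hn : 2 ≤ n) (hd : 6 ≤ d) :
    ∫ t in (Real.pi / n)..(Real.pi / 2), ‖dker n t‖ ^ d ≤
      n ^ (d - 1) * (Real.pi / (2 ^ d * (d - 1))) := by
  have hcont := dker_continuous n
  have hn' : (2:ℝ) ≤ n := by exact_mod_cast hn
  have hpi := Real.pi_pos
  have hpn : 0 < Real.pi / n := by positivity
  have hle : Real.pi / n ≤ Real.pi / 2 := by gcongr
  obtain ⟨k, rfl⟩ : ∃ k, d = k + 1 := ⟨d - 1, by omega⟩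
  have hk : (0:ℝ) < k := by exact_mod_cast (by omega : 0 < k)
  have hpos : ∀ t ∈ Set.uIcc (Real.pi / n) (Real.pi / 2), 0 < t := by
    intro t ht
    rw [Set.uIcc_of_le hle] at ht
    linarith [ht.1]
  have hd : ∀ t ∈ Set.uIcc (Real.pi / n) (Real.pi / 2),
      HasDerivAt (fun t : ℝ => -((Real.pi / 2) ^ (k + 1) / k) * t⁻¹ ^ k) (((Real.pi / 2) * t⁻¹) ^ (k + 1)) t := by
    intro t ht
    have h0 := (hpos t ht).ne'
    have := ((hasDerivAt_inv h0).pow k).const_mul (-((Real.pi / 2) ^ (k + 1) / k))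
    refine this.congr_deriv ?_
    obtain ⟨j, rfl⟩ : ∃ j, k = j + 1 := ⟨k - 1, by omega⟩
    have e : t⁻¹ ^ (j + 1 + 1) = t⁻¹ ^ j * (t ^ 2)⁻¹ := by
      rw [pow_succ, pow_succ, mul_assoc, ← sq, inv_pow t 2]
    rw [mul_pow, e]
    simp only [Nat.add_sub_cancel]
    field_simp
  have hci : IntervalIntegrable (fun t : ℝ => ((Real.pi / 2) * t⁻¹) ^ (k + 1)) MeasureTheory.volume
      (Real.pi / n) (Real.pi / 2) := by
    apply ContinuousOn.intervalIntegrable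
    apply ContinuousOn.pow
    apply ContinuousOn.mul continuousOn_const
    exact continuousOn_inv₀.mono (fun t ht => (hpos t ht).ne')
  have h1 : ∫ t in (Real.pi / n)..(Real.pi / 2), ‖dker n t‖ ^ (k + 1) ≤
      ∫ t in (Real.pi / n)..(Real.pi / 2), ((Real.pi / 2) * t⁻¹) ^ (k + 1) := by
    apply intervalIntegral.integral_mono_on hle
    · apply Continuous.intervalIntegrable
      fun_prop
    · exact hci
    · intro t ht
      exact pow_le_pow_left₀ (norm_nonneg _) (dker_tail n t (by linarith [ht.1]) ht.2) _
  refine h1.trans ?_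
  rw [intervalIntegral.integral_eq_sub_of_hasDerivAt hd hci]
  have h2 : 0 ≤ (Real.pi / 2) ^ (k + 1) / k * (Real.pi / 2)⁻¹ ^ k := by positivity
  have h3 : (Real.pi / 2) ^ (k + 1) / k * (Real.pi / n)⁻¹ ^ k =
      n ^ (k + 1 - 1) * (Real.pi / (2 ^ (k + 1) * (((k + 1 : ℕ) : ℝ) - 1))) := by
    simp only [Nat.add_sub_cancel]
    push_cast
    rw [add_sub_cancel_right, inv_div, div_pow, div_pow, pow_succ Real.pi]
    field_simp
  linarith

theorem int_big (n d : ℕ) (hn : 2 ≤ n) (hd : 6 ≤ d) :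
    ∫ t in (0:ℝ)..Real.pi, ‖dker n t‖ ^ d ≤
      Real.pi * (((n : ℝ) + d - 2) ^ (d - 1) * Real.sqrt (2 / d)) := by
  have hcont := dker_continuous n
  have hi : ∀ a b, IntervalIntegrable (fun t => ‖dker n t‖ ^ d) MeasureTheory.volume a b := by
    intro a b
    apply Continuous.intervalIntegrable
    fun_prop
  rw [int_half, ← intervalIntegral.integral_add_adjacent_intervals (hi 0 (Real.pi / n)) (hi _ _)]
  have h1 := int_main n d hn hd
  have h2 := int_tail n d hn hd
  have hn' : (2:ℝ) ≤ n := by exact_mod_cast hn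
  have hd' : (6:ℝ) ≤ d := by exact_mod_cast hd
  have hpi := Real.pi_pos
  have hn2 : 0 < (n:ℝ) ^ 2 - 1 := by nlinarith
  -- main term
  have m1 : n * Real.sqrt (Real.pi / (d * ((n:ℝ) ^ 2 - 1) / 6)) ≤
      (1 + 1 / (n:ℝ)) * (Real.pi * (1.3823 / Real.sqrt d)) := by
    have hsd : 0 < Real.sqrt d := Real.sqrt_pos.2 (by linarith)
    have : Real.sqrt (Real.pi / (d * ((n:ℝ) ^ 2 - 1) / 6)) ≤
        (1 + 1 / (n:ℝ)) * (Real.pi * (1.3823 / Real.sqrt d)) / n := by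
      apply Real.sqrt_le_iff.2
      refine ⟨by positivity, ?_⟩
      rw [div_pow, mul_pow, mul_pow, div_pow, Real.sq_sqrt (by linarith)]
      have hA : (n:ℝ) ^ 2 / (n ^ 2 - 1) ≤ (1 + 1 / (n:ℝ)) ^ 2 := by
        rw [div_le_iff₀ hn2]
        have : (1 + 1 / (n:ℝ)) ^ 2 * ((n:ℝ) ^ 2 - 1) = n ^ 2 + (2 * n ^ 3 - 2 * n - 1) / n ^ 2 := by
          field_simp
          ring
        rw [this]
        have : 0 ≤ (2 * (n:ℝ) ^ 3 - 2 * n - 1) / n ^ 2 := by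
          apply div_nonneg _ (by positivity)
          nlinarith [mul_pos hn2 (by linarith : (0:ℝ) < n)]
        linarith
      have hB : 6 / Real.pi ≤ 1.3823 ^ 2 := by
        rw [div_le_iff₀ hpi]
        nlinarith [Real.pi_gt_d4]
      have e1 : Real.pi / (d * ((n:ℝ) ^ 2 - 1) / 6) =
          ((n:ℝ) ^ 2 / (n ^ 2 - 1)) * (6 / Real.pi) * (Real.pi ^ 2 / (d * n ^ 2)) := by
        field_simp
      have e2 : (1 + 1 / (n:ℝ)) ^ 2 * (Real.pi ^ 2 * (1.3823 ^ 2 / (d:ℝ))) / n ^ 2 =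
          (1 + 1 / (n:ℝ)) ^ 2 * 1.3823 ^ 2 * (Real.pi ^ 2 / (d * n ^ 2)) := by
        field_simp
      rw [e1, e2]
      gcongr
    rw [le_div_iff₀ (by linarith)] at this
    linarith
  -- tail term
  have m2 : (2:ℝ) / (2 ^ d * (d - 1)) ≤ 0.0313 / Real.sqrt d := by
    have hsd : 0 < Real.sqrt d := Real.sqrt_pos.2 (by linarith)
    rw [div_le_div_iff₀ (by have : (0:ℝ) < d - 1 := by linarith
                            positivity) hsd]
    have h64 : (64:ℝ) ≤ 2 ^ d := by
      calc (64:ℝ) = 2 ^ 6 := by norm_num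
        _ ≤ 2 ^ d := pow_le_pow_right₀ (by norm_num) hd
    have hs : Real.sqrt d ≤ d / 2 := by
      apply Real.sqrt_le_iff.2
      constructor
      · linarith
      · nlinarith
    have : 64 * ((d:ℝ) - 1) ≤ 2 ^ d * (d - 1) := by
      apply mul_le_mul_of_nonneg_right h64; linarith
    nlinarith
  have m3 : 1 + 1 / (n:ℝ) ≤ (((n:ℝ) + d - 2) / n) ^ (d - 1) := by
    have e : ((n:ℝ) + d - 2) / n = 1 + (d - 2) / n := by field_simp; ring
    rw [e]
    have hq : 1 / (n:ℝ) ≤ (d - 2) / n := by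
      gcongr
      linarith
    have h0 : 0 ≤ 1 / (n:ℝ) := by positivity
    calc 1 + 1 / (n:ℝ) ≤ 1 + (d - 2) / n := by linarith
      _ ≤ (1 + (d - 2) / n) ^ (d - 1) := le_self_pow₀ (by linarith) (by omega)
  have m4 : (1.4136:ℝ) / Real.sqrt d ≤ Real.sqrt (2 / d) := by
    rw [Real.sqrt_div (by norm_num)]
    gcongr
    apply Real.le_sqrt_of_sq_le
    norm_num
  set Q := (((n:ℝ) + d - 2) / n) ^ (d - 1) with hQ
  have hQ2 : ((n:ℝ) + d - 2) ^ (d - 1) = n ^ (d - 1) * Q := by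
    rw [hQ, div_pow]
    field_simp
  rw [hQ2]
  have hQ1 : 1 ≤ Q := le_trans (by have : 0 ≤ 1 / (n:ℝ) := by positivity
                                   linarith) m3
  have hnd : (n:ℝ) ^ d = n ^ (d - 1) * n := by
    rw [← pow_succ]; congr 1; omega
  have hsd : 0 < Real.sqrt d := Real.sqrt_pos.2 (by linarith)
  have m5 : n * Real.sqrt (Real.pi / (d * ((n:ℝ) ^ 2 - 1) / 6)) ≤ Q * (Real.pi * (1.3823 / Real.sqrt d)) :=
    m1.trans (mul_le_mul_of_nonneg_right m3 (by positivity))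
  have m6 : Real.pi * ((2:ℝ) / (2 ^ d * (d - 1))) ≤ Q * (Real.pi * (0.0313 / Real.sqrt d)) := by
    have : Real.pi * ((2:ℝ) / (2 ^ d * (d - 1))) ≤ Real.pi * (0.0313 / Real.sqrt d) :=
      mul_le_mul_of_nonneg_left m2 hpi.le
    refine this.trans (le_mul_of_one_le_left (by positivity) hQ1)
  have m7 : n * Real.sqrt (Real.pi / (d * ((n:ℝ) ^ 2 - 1) / 6)) + Real.pi * ((2:ℝ) / (2 ^ d * (d - 1))) ≤
      Q * (Real.pi * Real.sqrt (2 / d)) := by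
    have : Q * (Real.pi * (1.3823 / Real.sqrt d)) + Q * (Real.pi * (0.0313 / Real.sqrt d)) =
      Q * (Real.pi * (1.4136 / Real.sqrt d)) := by ring
    have h8 : Q * (Real.pi * (1.4136 / Real.sqrt d)) ≤ Q * (Real.pi * Real.sqrt (2 / d)) := by gcongr
    linarith
  have m8 := mul_le_mul_of_nonneg_left m7 (by positivity : (0:ℝ) ≤ n ^ (d - 1))
  rw [hnd] at h1
  have e9 : (n:ℝ) ^ (d - 1) * (Real.pi / (2 ^ d * (d - 1))) * 2 =
    n ^ (d - 1) * (Real.pi * ((2:ℝ) / (2 ^ d * (d - 1)))) := by ring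
  linarith


theorem le_of_sq_le_sq_aux {a b : ℝ} (h : a ^ 2 ≤ b ^ 2) (hb : 0 ≤ b) : a ≤ b := by
  nlinarith [sq_nonneg (a - b)]

theorem int_bound (n d : ℕ) (hn : 2 ≤ n) (hd : 2 ≤ d) :
    ∫ t in (0:ℝ)..Real.pi, ‖dker n t‖ ^ d ≤
      Real.pi * (((n : ℝ) + d - 2) ^ (d - 1) * Real.sqrt (2 / d)) := by
  have hn' : (2:ℝ) ≤ n := by exact_mod_cast hn
  have hpi := Real.pi_pos
  rcases (by omega : d = 2 ∨ d = 3 ∨ d = 4 ∨ d = 5 ∨ 6 ≤ d) with rfl | rfl | rfl | rfl | h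
  · rw [int_two]
    norm_num
  · have h3 := int_cs n 2
    rw [int_two] at h3
    have h4 := mul_le_mul_of_nonneg_left (int_four n) (by positivity : 0 ≤ Real.pi * (n:ℝ))
    refine le_of_sq_le_sq_aux ?_ (by
      have : (0:ℝ) ≤ (n:ℝ) + (3:ℕ) - 2 := by push_cast; linarith
      positivity)
    refine (h3.trans h4).trans ?_
    rw [mul_pow, mul_pow, Real.sq_sqrt (by norm_num)]
    have e : Real.pi * n * (Real.pi * ((2 * (n:ℝ) ^ 3 + n) / 3)) =
      Real.pi ^ 2 * (n * ((2 * (n:ℝ) ^ 3 + n) / 3)) := by ring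
    rw [e]
    apply mul_le_mul_of_nonneg_left _ (by positivity)
    push_cast
    have : (0:ℝ) ≤ (n:ℝ) ^ 3 := by positivity
    norm_num
    nlinarith
  · refine (int_four n).trans ?_
    apply mul_le_mul_of_nonneg_left _ hpi.le
    have hs : (0.7:ℝ) ≤ Real.sqrt (2 / (4:ℕ)) := by
      apply Real.le_sqrt_of_sq_le
      norm_num
    have e : (n:ℝ) + (4:ℕ) - 2 = n + 2 := by push_cast; ring
    rw [e]
    refine le_trans ?_ (mul_le_mul_of_nonneg_left hs (by positivity))
    norm_num
    have : (0:ℝ) ≤ (n:ℝ) ^ 3 := by positivity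
    nlinarith
  · have h5 := int_cs n 4
    have h6 := int_big n 6 hn le_rfl
    have e6 : (n:ℝ) + (6:ℕ) - 2 = n + 4 := by push_cast; ring
    have e5 : (n:ℝ) + (5:ℕ) - 2 = n + 3 := by push_cast; ring
    have hs : Real.sqrt (2 / (6:ℕ)) ≤ 0.5774 := by
      apply Real.sqrt_le_iff.2
      norm_num
    rw [e6] at h6
    rw [e5]
    have h6' : ∫ t in (0:ℝ)..Real.pi, ‖dker n t‖ ^ 6 ≤ Real.pi * (((n : ℝ) + 4) ^ 5 * 0.5774) := by
      refine h6.trans ?_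
      gcongr
    have h7 := mul_le_mul (int_four n) h6'
      (intervalIntegral.integral_nonneg hpi.le (fun t _ => by positivity)) (by positivity)
    refine le_of_sq_le_sq_aux ?_ (by positivity)
    refine (h5.trans h7).trans ?_
    rw [mul_pow, mul_pow, Real.sq_sqrt (by norm_num)]
    have e : Real.pi * ((2 * (n:ℝ) ^ 3 + n) / 3) * (Real.pi * (((n : ℝ) + 4) ^ 5 * 0.5774)) =
      Real.pi ^ 2 * (((2 * (n:ℝ) ^ 3 + n) / 3) * (((n : ℝ) + 4) ^ 5 * 0.5774)) := by ring
    rw [e]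
    apply mul_le_mul_of_nonneg_left _ (by positivity)
    push_cast
    rw [← sub_nonneg]
    ring_nf
    positivity
  · exact int_big n d hn h



/-- Every antichain `U` in the partial order on `d`-element subsets of an `n`-element set
`X` of positive integers satisfies `|U| ≤ (1/d!) · (n + d - 2)^(d-1) · √(2/d)`. -/
theorem subset_antichain_bound (d n : ℕ) (hd : 1 ≤ d) (hn : d ≤ n)
    (X : Finset ℕ) (hX : ∀ x ∈ X, 0 < x) (hcard : X.card = n)
    (U : Finset (Finset ℕ)) (hU : U ⊆ X.powersetCard d)
    (hanti : IsAntichain (SubsetLE d) (U : Set (Finset ℕ))) :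
    (U.card : ℝ) ≤ (1 / d.factorial) * ((n : ℝ) + d - 2) ^ (d - 1) * Real.sqrt (2 / d) := by
  have main : (d.factorial : ℝ) * U.card ≤ ((n : ℝ) + d - 2) ^ (d - 1) * Real.sqrt (2 / d) := by
    obtain ⟨A, hAc, hAm, hAa⟩ := reduction d n X hcard (by omega) U hU hanti
    have hAc' : (A.card : ℝ) = (d.factorial : ℝ) * U.card := by exact_mod_cast hAc
    rw [← hAc']
    rcases hd.eq_or_lt with rfl | hd2
    · have h1 : A.card ≤ 1 := by
        rw [Finset.card_le_one]
        intro x hx y hy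
        rcases le_total (x 0) (y 0) with h | h
        · exact hAa x hx y hy (fun i => by rwa [Subsingleton.elim i 0])
        · exact (hAa y hy x hx (fun i => by rwa [Subsingleton.elim i 0])).symm
      have h2 : (1:ℝ) ≤ Real.sqrt (2 / (1:ℕ)) := by
        apply Real.le_sqrt_of_sq_le
        norm_num
      have h3 : (A.card : ℝ) ≤ 1 := by exact_mod_cast h1
      simp only [Nat.sub_self, pow_zero, one_mul]
      linarith
    · have h1 := antichain_le_middle (n - 1) d A hAm hAa
      rw [Nat.sub_add_cancel (by omega : 1 ≤ n)] at h1
      have h2 := (count_le_integral n d (d * (n - 1) / 2)).trans (int_bound n d (by omega) hd2)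
      rw [mul_comm] at h2
      have h3 := le_of_mul_le_mul_left h2 Real.pi_pos
      exact le_trans (by exact_mod_cast h1) h3
  have hf : (0:ℝ) < d.factorial := by exact_mod_cast d.factorial_pos
  rw [mul_assoc, one_div, ← div_eq_inv_mul, le_div_iff₀ hf, mul_comm]
  exact main
end
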